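/- Let (A, t) be a C_k-algebra and let U ⊆ A be an ultrafilter. Then N = ⋂_{i=0}^{k-1} (t^i(U) ∩ φ(t^i(U))) is a c-filter of A. -/

import Mathlib

universe u

/-- Modal pseudocomplemented De Morgan algebra (mpM-algebra). -/
class MpM (A : Type u) extends DistribLattice A, BoundedOrder A where
  dm : A → A   -- De Morgan negation ∼
  ps : A → A   -- pseudocomplement *
  dm_dm : ∀ x : A, dm (dm x) = x
  dm_sup : ∀ x y : A, dm (x ⊔ y) = dm x ⊓ dm y
  pseudo : ∀ a x : A, a ⊓ x = ⊥ ↔ x ≤ ps a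
  modal : ∀ x : A, x ⊔ dm x ≤ x ⊔ ps x

open MpM

variable {A : Type u} [MpM A]

/-- ∇x = ∼(∼x ∧ x*) -/
def nabla (x : A) : A := dm (dm x ⊓ ps x)

/-- △x = ∼∇∼x -/
def tri (x : A) : A := dm (nabla (dm x))

/-- A C_k-algebra structure on an mpM-algebra `A`: an automorphism `t` with `t^k = id`. -/
structure CkStr (A : Type u) [MpM A] (k : ℕ) where
  t : A → A
  bij : Function.Bijective t
  map_inf : ∀ x y : A, t (x ⊓ y) = t x ⊓ t y
  map_sup : ∀ x y : A, t (x ⊔ y) = t x ⊔ t y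
  map_dm : ∀ x : A, t (dm x) = dm (t x)
  map_ps : ∀ x : A, t (ps x) = ps (t x)
  map_bot : t (⊥ : A) = ⊥
  map_top : t (⊤ : A) = ⊤
  periodic : ∀ x : A, t^[k] x = x

/-- Lattice filter: nonempty, upward closed, closed under binary meets. -/
def IsLatFilter (F : Set A) : Prop :=
  F.Nonempty ∧ (∀ x ∈ F, ∀ y : A, x ≤ y → y ∈ F) ∧ ∀ x ∈ F, ∀ y ∈ F, x ⊓ y ∈ F

/-- c-filter: a filter closed under △ and t. -/
def IsCFilter {k : ℕ} (T : CkStr A k) (F : Set A) : Prop :=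
  IsLatFilter F ∧ ∀ x ∈ F, tri x ∈ F ∧ T.t x ∈ F

/-- maximal c-filter: proper and not properly contained in a proper c-filter. -/
def IsMaxCFilter {k : ℕ} (T : CkStr A k) (N : Set A) : Prop :=
  IsCFilter T N ∧ N ≠ Set.univ ∧
    ∀ G : Set A, IsCFilter T G → G ≠ Set.univ → N ⊆ G → N = G

/-- prime filter -/
def IsPrimeFilter (P : Set A) : Prop :=
  IsLatFilter P ∧ P ≠ Set.univ ∧ ∀ x y : A, x ⊔ y ∈ P → x ∈ P ∨ y ∈ P

/-- ultrafilter: maximal proper (lattice) filter -/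
def IsUltraFilter (U : Set A) : Prop :=
  IsLatFilter U ∧ U ≠ Set.univ ∧
    ∀ G : Set A, IsLatFilter G → G ≠ Set.univ → U ⊆ G → U = G

/-- Birula–Rasiowa transformation φ(P) = A \ {∼x : x ∈ P}. -/
def brPhi (P : Set A) : Set A := Set.univ \ (dm '' P)

/-- a ⇁ b = (⋁_{i=1}^{k} ∇(∼ t^i(a))) ∨ b -/
def rimp {k : ℕ} (T : CkStr A k) (a b : A) : A :=
  ((Finset.Icc 1 k).sup fun i => nabla (dm (T.t^[i] a))) ⊔ b

/-- cyclic deductive system -/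
def IsCDS {k : ℕ} (T : CkStr A k) (D : Set A) : Prop :=
  (⊤ : A) ∈ D ∧ ∀ x ∈ D, ∀ y : A, rimp T x y ∈ D → y ∈ D

/-- maximal cyclic deductive system -/
def IsMaxCDS {k : ℕ} (T : CkStr A k) (M : Set A) : Prop :=
  IsCDS T M ∧ M ≠ Set.univ ∧
    ∀ G : Set A, IsCDS T G → G ≠ Set.univ → M ⊆ G → M = G

/-- the smallest cyclic deductive system containing `X` -/
def genCDS {k : ℕ} (T : CkStr A k) (X : Set A) : Set A :=
  ⋂₀ {D : Set A | IsCDS T D ∧ X ⊆ D}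

/-- K(A) = {x : t(x) = x and ∇x = x} -/
def Kset {k : ℕ} (T : CkStr A k) : Set A := {x : A | T.t x = x ∧ nabla x = x}

/-- consistency operator ∘x = ⋀_{i=0}^{k} t^i((∼x ∨ x) ∧ (x ∧ ∼x)*) -/
def cCirc {k : ℕ} (T : CkStr A k) (x : A) : A :=
  (Finset.Icc 0 k).inf fun i => T.t^[i] ((dm x ⊔ x) ⊓ ps (x ⊓ dm x))

/-- x → y = ∼((∼(x∨y))* ∧ (x∨y)) ∨ ((∼(x∧y))* ∧ (x∧y)) -/
def mpTo (x y : A) : A :=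
  dm (ps (dm (x ⊔ y)) ⊓ (x ⊔ y)) ⊔ (ps (dm (x ⊓ y)) ⊓ (x ⊓ y))

/-- x ⇒ y = (x → y) ∧ (∼y → ∼x) -/
def mpIff (x y : A) : A := mpTo x y ⊓ mpTo (dm y) (dm x)

/-!
For a prime filter `P`, the set `P ∩ φ(P)` consists of the `x ∈ P` with `∼x ∉ P`. Primeness makes
it a filter, and the modal axiom at `∼x`, which gives `x ≤ ∼x ∨ (∼x)*`, together with its De Morgan
dual makes it closed under `△x = x ∧ (∼x)*`. Since `t` is an automorphism,
`tⁱ(P) ∩ φ(tⁱ(P)) = tⁱ(P ∩ φ(P))` is again such a filter, and `t` permutes these `k` filters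
cyclically because `tᵏ = id`, so their intersection is closed under `t`.
-/

namespace MpM

theorem dm_antitone : Antitone (dm : A → A) := fun x y hxy => by
  rw [← sup_eq_right.2 hxy, dm_sup]
  exact inf_le_left

theorem dm_inf (x y : A) : dm (x ⊓ y) = dm x ⊔ dm y := by
  rw [← dm_dm (dm x ⊔ dm y), dm_sup, dm_dm, dm_dm]

theorem dm_top : dm (⊤ : A) = ⊥ :=
  le_bot_iff.1 <| (dm_antitone le_top).trans_eq (dm_dm ⊥)

theorem tri_eq_inf_ps_dm (x : A) : tri x = x ⊓ ps (dm x) := by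
  rw [tri, nabla, dm_dm, dm_dm]

theorem le_dm_sup_ps_dm (x : A) : x ≤ dm x ⊔ ps (dm x) :=
  calc
    x ≤ dm x ⊔ dm (dm x) := (dm_dm x).ge.trans le_sup_right
    _ ≤ dm x ⊔ ps (dm x) := modal (dm x)

theorem inf_dm_ps_dm_le_dm (x : A) : x ⊓ dm (ps (dm x)) ≤ dm x :=
  calc
    x ⊓ dm (ps (dm x)) = dm (dm x ⊔ ps (dm x)) := by rw [dm_sup, dm_dm]
    _ ≤ dm x := dm_antitone (le_dm_sup_ps_dm x)

end MpM

theorem mem_brPhi {P : Set A} {x : A} : x ∈ brPhi P ↔ dm x ∉ P := by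
  rw [brPhi, Set.image_eq_preimage_of_inverse dm_dm dm_dm]
  exact and_iff_right (Set.mem_univ x)

namespace IsLatFilter

variable {F : Set A} {x y : A}

theorem mem_of_le (hF : IsLatFilter F) (hx : x ∈ F) (hxy : x ≤ y) : y ∈ F :=
  hF.2.1 x hx y hxy

theorem inf_mem (hF : IsLatFilter F) (hx : x ∈ F) (hy : y ∈ F) : x ⊓ y ∈ F :=
  hF.2.2 x hx y hy

theorem top_mem (hF : IsLatFilter F) : (⊤ : A) ∈ F :=
  let ⟨_, hx⟩ := hF.1
  hF.mem_of_le hx le_top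

theorem bot_mem_iff (hF : IsLatFilter F) : (⊥ : A) ∈ F ↔ F = Set.univ :=
  ⟨fun h => Set.eq_univ_of_forall fun _ => hF.mem_of_le h bot_le, fun h => h ▸ Set.mem_univ _⟩

end IsLatFilter

/-- The filter generated by a filter `F` together with one more element `a`. -/
def adjoin (F : Set A) (a : A) : Set A := {x | ∃ u ∈ F, u ⊓ a ≤ x}

theorem subset_adjoin (F : Set A) (a : A) : F ⊆ adjoin F a :=
  fun u hu => ⟨u, hu, inf_le_left⟩

theorem IsLatFilter.mem_adjoin_self {F : Set A} (hF : IsLatFilter F) (a : A) : a ∈ adjoin F a :=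
  ⟨⊤, hF.top_mem, inf_le_right⟩

theorem IsLatFilter.adjoin {F : Set A} (hF : IsLatFilter F) (a : A) :
    IsLatFilter (adjoin F a) := by
  refine ⟨⟨a, hF.mem_adjoin_self a⟩, ?_, ?_⟩
  · rintro x ⟨u, hu, hux⟩ y hxy
    exact ⟨u, hu, hux.trans hxy⟩
  · rintro x ⟨u, hu, hux⟩ y ⟨v, hv, hvy⟩
    refine ⟨u ⊓ v, hF.inf_mem hu hv, ?_⟩
    rw [inf_inf_distrib_right]
    exact inf_le_inf hux hvy

namespace IsUltraFilter

variable {U : Set A}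

theorem exists_inf_eq_bot_of_notMem (hU : IsUltraFilter U) {a : A} (ha : a ∉ U) :
    ∃ u ∈ U, u ⊓ a = ⊥ := by
  obtain ⟨hF, -, hmax⟩ := hU
  have hadj : adjoin U a = Set.univ := by
    by_contra hproper
    exact ha (hmax _ (hF.adjoin a) hproper (subset_adjoin U a) ▸ hF.mem_adjoin_self a)
  obtain ⟨u, hu, hua⟩ := (hF.adjoin a).bot_mem_iff.2 hadj
  exact ⟨u, hu, le_bot_iff.1 hua⟩

theorem isPrimeFilter (hU : IsUltraFilter U) : IsPrimeFilter U := by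
  refine ⟨hU.1, hU.2.1, fun x y hxy => or_iff_not_imp_left.2 fun hx => ?_⟩
  obtain ⟨u, hu, hux⟩ := hU.exists_inf_eq_bot_of_notMem hx
  have hinf : u ⊓ (x ⊔ y) = u ⊓ y := by rw [inf_sup_left, hux, bot_sup_eq]
  exact hU.1.mem_of_le (hinf ▸ hU.1.inf_mem hu hxy) inf_le_right

end IsUltraFilter

/-- A modal filter is a lattice filter closed under `△`; a c-filter is a modal filter that is
moreover closed under the automorphism `t`. -/
def IsModalFilter (F : Set A) : Prop :=
  IsLatFilter F ∧ ∀ x ∈ F, tri x ∈ F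

theorem IsModalFilter.isCFilter {k : ℕ} {T : CkStr A k} {F : Set A} (hF : IsModalFilter F)
    (ht : Set.MapsTo T.t F F) : IsCFilter T F :=
  ⟨hF.1, fun x hx => ⟨hF.2 x hx, ht hx⟩⟩

theorem IsModalFilter.iInter {ι : Sort*} {F : ι → Set A} (hF : ∀ i, IsModalFilter (F i)) :
    IsModalFilter (⋂ i, F i) := by
  simp only [IsModalFilter, IsLatFilter, Set.mem_iInter]
  exact ⟨⟨⟨⊤, Set.mem_iInter.2 fun i => (hF i).1.top_mem⟩,
    fun x hx y hxy i => (hF i).1.mem_of_le (hx i) hxy,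
    fun x hx y hy i => (hF i).1.inf_mem (hx i) (hy i)⟩,
    fun x hx i => (hF i).2 x (hx i)⟩

namespace IsPrimeFilter

variable {P : Set A}

theorem sup_mem_iff (hP : IsPrimeFilter P) {x y : A} : x ⊔ y ∈ P ↔ x ∈ P ∨ y ∈ P :=
  ⟨hP.2.2 x y, Or.rec (hP.1.mem_of_le · le_sup_left) (hP.1.mem_of_le · le_sup_right)⟩

theorem bot_notMem (hP : IsPrimeFilter P) : (⊥ : A) ∉ P :=
  hP.1.bot_mem_iff.not.2 hP.2.1

theorem isLatFilter_inter_brPhi (hP : IsPrimeFilter P) : IsLatFilter (P ∩ brPhi P) := by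
  refine ⟨⟨⊤, hP.1.top_mem, ?_⟩, ?_, ?_⟩
  · rw [mem_brPhi, dm_top]
    exact hP.bot_notMem
  · rintro x ⟨hx, hdx⟩ y hxy
    rw [mem_brPhi] at hdx
    exact ⟨hP.1.mem_of_le hx hxy, mem_brPhi.2 fun hdy => hdx (hP.1.mem_of_le hdy (dm_antitone hxy))⟩
  · rintro x ⟨hx, hdx⟩ y ⟨hy, hdy⟩
    rw [mem_brPhi] at hdx hdy
    refine ⟨hP.1.inf_mem hx hy, ?_⟩
    rw [mem_brPhi, dm_inf, hP.sup_mem_iff]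
    exact not_or_intro hdx hdy

theorem tri_mem_inter_brPhi (hP : IsPrimeFilter P) {x : A} (hx : x ∈ P ∩ brPhi P) :
    tri x ∈ P ∩ brPhi P := by
  obtain ⟨hx, hdx⟩ := hx
  rw [mem_brPhi] at hdx
  have hps : ps (dm x) ∈ P :=
    (hP.sup_mem_iff.1 (hP.1.mem_of_le hx (le_dm_sup_ps_dm x))).resolve_left hdx
  have hdps : dm (ps (dm x)) ∉ P := fun h =>
    hdx (hP.1.mem_of_le (hP.1.inf_mem hx h) (inf_dm_ps_dm_le_dm x))
  rw [tri_eq_inf_ps_dm]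
  refine ⟨hP.1.inf_mem hx hps, ?_⟩
  rw [mem_brPhi, dm_inf, hP.sup_mem_iff]
  exact not_or_intro hdx hdps

theorem isModalFilter_inter_brPhi (hP : IsPrimeFilter P) : IsModalFilter (P ∩ brPhi P) :=
  ⟨hP.isLatFilter_inter_brPhi, fun _ => hP.tri_mem_inter_brPhi⟩

end IsPrimeFilter

namespace CkStr

variable {k : ℕ} (T : CkStr A k)

theorem le_of_map_le {x y : A} (h : T.t x ≤ T.t y) : x ≤ y := by
  rw [← inf_eq_left, ← T.map_inf] at h
  exact inf_eq_left.1 (T.bij.injective h)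

theorem map_tri (x : A) : T.t (tri x) = tri (T.t x) := by
  simp only [tri_eq_inf_ps_dm, T.map_inf, T.map_ps, T.map_dm]

theorem isLatFilter_image {F : Set A} (hF : IsLatFilter F) : IsLatFilter (T.t '' F) := by
  refine ⟨hF.1.image T.t, ?_, ?_⟩
  · rintro _ ⟨x, hx, rfl⟩ y hxy
    obtain ⟨y, rfl⟩ := T.bij.surjective y
    exact Set.mem_image_of_mem T.t (hF.mem_of_le hx (T.le_of_map_le hxy))
  · rintro _ ⟨x, hx, rfl⟩ _ ⟨y, hy, rfl⟩
    exact ⟨x ⊓ y, hF.inf_mem hx hy, T.map_inf x y⟩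

theorem isModalFilter_image {F : Set A} (hF : IsModalFilter F) : IsModalFilter (T.t '' F) := by
  refine ⟨T.isLatFilter_image hF.1, ?_⟩
  rintro _ ⟨x, hx, rfl⟩
  exact ⟨tri x, hF.2 x hx, T.map_tri x⟩

theorem isModalFilter_image_iterate {F : Set A} (hF : IsModalFilter F) (n : ℕ) :
    IsModalFilter (T.t^[n] '' F) := by
  induction n with
  | zero => rwa [Function.iterate_zero, Set.image_id]
  | succ n ih =>
    rw [Function.iterate_succ', Set.image_comp]
    exact T.isModalFilter_image ih

theorem image_iterate_inter_brPhi (P : Set A) (n : ℕ) :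
    T.t^[n] '' (P ∩ brPhi P) = T.t^[n] '' P ∩ brPhi (T.t^[n] '' P) := by
  have hbij : Function.Bijective T.t^[n] := T.bij.iterate n
  have hdm : Function.Commute T.t^[n] dm := Function.Commute.iterate_left T.map_dm n
  rw [Set.image_inter hbij.injective, brPhi, brPhi, ← Set.compl_eq_univ_sdiff,
    ← Set.compl_eq_univ_sdiff, Set.image_compl_eq hbij, hdm.set_image P]

end CkStr

theorem mapsTo_iInter_image_iterate {α : Type*} {f : α → α} {k : ℕ} (hf : ∀ x, f^[k] x = x)
    (S : Set α) :
    Set.MapsTo f (⋂ i ∈ Finset.range k, f^[i] '' S) (⋂ i ∈ Finset.range k, f^[i] '' S) := by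
  have hstep : ∀ {i x}, x ∈ f^[i] '' S → f x ∈ f^[i + 1] '' S := by
    rintro i _ ⟨s, hs, rfl⟩
    exact ⟨s, hs, Function.iterate_succ_apply' f i s⟩
  intro x hx
  simp only [Set.mem_iInter, Finset.mem_range] at hx ⊢
  rintro (_ | i) hi
  · have hlast : f x ∈ f^[k] '' S := Nat.sub_add_cancel hi ▸ hstep (hx (k - 1) (by lia))
    rw [funext hf, Set.image_id'] at hlast
    rwa [Function.iterate_zero, Set.image_id]
  · exact hstep (hx i (by lia))

theorem stmt1_general {k : ℕ} (T : CkStr A k) {P : Set A} (hP : IsPrimeFilter P) :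
    IsCFilter T (⋂ i ∈ Finset.range k, (T.t^[i] '' P ∩ brPhi (T.t^[i] '' P))) := by
  simp only [← T.image_iterate_inter_brPhi]
  have hmodal : ∀ i, IsModalFilter (T.t^[i] '' (P ∩ brPhi P)) :=
    T.isModalFilter_image_iterate hP.isModalFilter_inter_brPhi
  exact (IsModalFilter.iInter fun i => .iInter fun _ => hmodal i).isCFilter
    (mapsTo_iInter_image_iterate T.periodic (P ∩ brPhi P))

theorem stmt1 {k : ℕ} (hk : 0 < k) (T : CkStr A k) (U : Set A)
    (hU : IsUltraFilter U) :
    IsCFilter T (⋂ i ∈ Finset.range k, (T.t^[i] '' U ∩ brPhi (T.t^[i] '' U))) :=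
  stmt1_general T hU.isPrimeFilter
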